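/- Let X = ({0} × [0,1]) ∪ ([0,1] × {0}) ⊆ ℝ², equipped with the Euclidean metric, and let Y = {(0,1), (1,0)}. If F : Y → ℝ is not constant, then F admits no absolutely minimal (AM) extension u : X → ℝ. -/

import Mathlib

open Metric Set

noncomputable section

/-- The (possibly infinite) Lipschitz constant of `u` on `S`. -/
def lipOn {X : Type*} [MetricSpace X] (u : X → ℝ) (S : Set X) : ENNReal :=
  ⨆ (x : X) (_ : x ∈ S) (y : X) (_ : y ∈ S) (_ : x ≠ y),
    ENNReal.ofReal (|u x - u y| / dist x y)

/-- `u : X → ℝ` is an absolutely minimal (AM) extension of `F` prescribed on `Y`. -/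
def IsAMExtension {X : Type*} [MetricSpace X] (Y : Set X) (F u : X → ℝ) : Prop :=
  lipOn u Set.univ < ⊤ ∧ Set.EqOn u F Y ∧
    ∀ U : Set X, IsOpen U → U ⊆ Yᶜ → lipOn u U = lipOn u (frontier U)

/-- The point `(x, y)` of the Euclidean plane. -/
def pt (x y : ℝ) : EuclideanSpace ℝ (Fin 2) :=
  (WithLp.equiv 2 (Fin 2 → ℝ)).symm ![x, y]

/-- The L-shaped set `({0} × [0,1]) ∪ ([0,1] × {0}) ⊆ ℝ²` (Euclidean metric). -/
def LSet : Set (EuclideanSpace ℝ (Fin 2)) :=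
  {p | (p 0 = 0 ∧ p 1 ∈ Icc (0 : ℝ) 1) ∨ (p 0 ∈ Icc (0 : ℝ) 1 ∧ p 1 = 0)}

/-!
Along a leg of the L an AM extension is affine, with slope `a` on the horizontal leg and `b` on the
vertical one. The points of the L within `x` and `y` of the corner form an open set with the two
boundary points `(x, 0)` and `(0, y)`, so the Lipschitz constant on it is
`|a x - b y| / √(x² + y²)`, the length of the projection of `(a, -b)` to the line spanned by
`(x, y)`. This constant grows with the set, but depends only on the ratio `x : y`; hence it is the
same for all directions of the quadrant, which forces `a = b = 0`,
and the extension takes its value at the corner also at both tips.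
-/

section Lipschitz

variable {X : Type*} [MetricSpace X]

theorem lipOn_le_iff {u : X → ℝ} {S : Set X} {C : NNReal} :
    lipOn u S ≤ C ↔ LipschitzOnWith C u S := by
  simp only [lipOn, iSup_le_iff, lipschitzOnWith_iff_dist_le_mul, Real.dist_eq]
  refine forall₄_congr fun x _ y _ ↦ ?_
  rcases eq_or_ne x y with rfl | hxy
  · simp
  · rw [ENNReal.ofReal_le_iff_le_toReal ENNReal.coe_ne_top, ENNReal.coe_toReal,
      div_le_iff₀ (dist_pos.2 hxy), forall_prop_of_true hxy]

theorem lipschitzOnWith_pair {Z : Type*} [PseudoMetricSpace Z] (u : X → Z) (x y : X) :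
    LipschitzOnWith (nndist (u x) (u y) / nndist x y) u {x, y} := by
  rcases eq_or_ne x y with rfl | hxy
  · simp [lipschitzOnWith_iff_dist_le_mul]
  have hd : dist x y ≠ 0 := dist_ne_zero.2 hxy
  refine LipschitzOnWith.of_dist_le_mul fun p hp q hq ↦ ?_
  rw [NNReal.coe_div, coe_nndist, coe_nndist]
  rcases hp with rfl | rfl <;> rcases hq with rfl | rfl
  · simp
  · rw [div_mul_cancel₀ _ hd]
  · rw [dist_comm p, dist_comm (u p), div_mul_cancel₀ _ hd]
  · simp

namespace IsAMExtension

variable {Y U : Set X} {F u : X → ℝ}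

theorem continuous (hu : IsAMExtension Y F u) : Continuous u := by
  have h : lipOn u univ ≤ (lipOn u univ).toNNReal := (ENNReal.coe_toNNReal hu.1.ne).ge
  exact (lipschitzOnWith_univ.1 (lipOn_le_iff.1 h)).continuous

theorem lipschitzOnWith_closure (hu : IsAMExtension Y F u) (hU : IsOpen U) (hUY : U ⊆ Yᶜ)
    {C : NNReal} (h : LipschitzOnWith C u (frontier U)) : LipschitzOnWith C u (closure U) := by
  rw [lipschitzOnWith_closure_iff hu.continuous.continuousOn, ← lipOn_le_iff, hu.2.2 U hU hUY]
  exact lipOn_le_iff.2 h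

theorem dist_mul_dist_le (hu : IsAMExtension Y F u) (hU : IsOpen U) (hUY : U ⊆ Yᶜ) {x y : X}
    (hfr : frontier U ⊆ {x, y}) {p q : X} (hp : p ∈ closure U) (hq : q ∈ closure U) :
    dist (u p) (u q) * dist x y ≤ dist (u x) (u y) * dist p q := by
  rcases eq_or_ne x y with rfl | hxy
  · simp
  have h := (hu.lipschitzOnWith_closure hU hUY
    ((lipschitzOnWith_pair u x y).mono hfr)).dist_le_mul p hp q hq
  rw [NNReal.coe_div, coe_nndist, coe_nndist, div_mul_eq_mul_div] at h
  exact (le_div_iff₀ (dist_pos.2 hxy)).1 h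

end IsAMExtension

end Lipschitz

theorem frontier_image_Ioo_subset {X : Type*} [TopologicalSpace X] [T2Space X]
    {γ : unitInterval → X} (hγ : Continuous γ) (hU : IsOpen (γ '' Ioo 0 1)) :
    frontier (γ '' Ioo 0 1) ⊆ {γ 0, γ 1} := by
  have hcl : closure (γ '' Ioo 0 1) ⊆ range γ :=
    closure_minimal (image_subset_range _ _) (isCompact_range hγ).isClosed
  rw [hU.frontier_eq]
  rintro z ⟨hz, hzU⟩
  obtain ⟨t, rfl⟩ := hcl hz
  rcases (unitInterval.nonneg' : 0 ≤ t).eq_or_lt with rfl | h0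
  · exact Or.inl rfl
  rcases (unitInterval.le_one' : t ≤ 1).eq_or_lt with rfl | h1
  · exact Or.inr rfl
  · exact absurd ⟨t, ⟨h0, h1⟩, rfl⟩ hzU

theorem mem_closure_image_Ioo {X : Type*} [TopologicalSpace X]
    {γ : unitInterval → X} (hγ : Continuous γ) (t : unitInterval) :
    γ t ∈ closure (γ '' Ioo 0 1) := by
  refine image_closure_subset_closure_image hγ (mem_image_of_mem γ ?_)
  rw [closure_Ioo zero_ne_one]
  exact ⟨unitInterval.nonneg', unitInterval.le_one'⟩

theorem eq_add_mul_of_abs_sub_le {x y z t : ℝ} (hx : |z - x| ≤ |y - x| * t)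
    (hy : |y - z| ≤ |y - x| * (1 - t)) : z = x + t * (y - x) := by
  rw [abs_le] at hx hy
  rcases abs_cases (y - x) with ⟨h, -⟩ | ⟨h, -⟩ <;> rw [h] at hx hy <;> linarith

theorem IsAMExtension.apply_isometry {X : Type*} [MetricSpace X] {Y : Set X} {F u : X → ℝ}
    (hu : IsAMExtension Y F u) {γ : unitInterval → X} (hγ : Isometry γ)
    (hU : IsOpen (γ '' Ioo 0 1)) (hUY : γ '' Ioo 0 1 ⊆ Yᶜ) (t : unitInterval) :
    u (γ t) = u (γ 0) + t * (u (γ 1) - u (γ 0)) := by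
  have hle (r s : unitInterval) :
      |u (γ r) - u (γ s)| ≤ |u (γ 1) - u (γ 0)| * |(r : ℝ) - s| := by
    have h := hu.dist_mul_dist_le hU hUY (frontier_image_Ioo_subset hγ.continuous hU)
      (mem_closure_image_Ioo hγ.continuous r)
      (mem_closure_image_Ioo hγ.continuous s)
    simpa [hγ.dist_eq, Subtype.dist_eq, Real.dist_eq, abs_sub_comm (u (γ 0))] using h
  apply eq_add_mul_of_abs_sub_le
  · simpa [abs_of_nonneg t.2.1] using hle t 0
  · simpa [abs_of_nonneg (sub_nonneg.2 t.2.2)] using hle 1 t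

theorem eq_zero_of_forall_sq_mul_le {a b : ℝ}
    (h : ∀ x y x' y' : ℝ, x ≤ 1 → y ≤ 1 → x' ∈ Ico 0 x → y' ∈ Ico 0 y →
      (a * x' - b * y') ^ 2 * (x ^ 2 + y ^ 2) ≤ (a * x - b * y) ^ 2 * (x' ^ 2 + y' ^ 2)) :
    a = 0 ∧ b = 0 := by
  -- The subscript of each bound is the direction that it compares with `(1, 1)`.
  have h₁₀ : 2 * a ^ 2 ≤ (a - b) ^ 2 := by
    linarith [h 1 1 (1 / 2) 0 (by norm_num) (by norm_num) (by norm_num) (by norm_num)]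
  have h₀₁ : 2 * b ^ 2 ≤ (a - b) ^ 2 := by
    linarith [h 1 1 0 (1 / 2) (by norm_num) (by norm_num) (by norm_num) (by norm_num)]
  have h₂₁ : 5 * (a - b) ^ 2 ≤ 2 * (2 * a - b) ^ 2 := by
    linarith [h 1 (1 / 2) (1 / 4) (1 / 4) (by norm_num) (by norm_num) (by norm_num) (by norm_num)]
  have h₁₂ : 5 * (a - b) ^ 2 ≤ 2 * (a - 2 * b) ^ 2 := by
    linarith [h (1 / 2) 1 (1 / 4) (1 / 4) (by norm_num) (by norm_num) (by norm_num) (by norm_num)]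
  have hab : a * b = 0 := by linarith
  have hsq : a ^ 2 = b ^ 2 := by linarith
  rcases mul_eq_zero.1 hab with rfl | rfl
  · exact ⟨rfl, by simpa using hsq.symm⟩
  · exact ⟨by simpa using hsq, rfl⟩

namespace LSet

/-- The isometric parametrization of a leg of the L by arc length from the corner: `leg 0` is the
horizontal leg and `leg 1` the vertical one. -/
def leg (i : Fin 2) (t : unitInterval) : ↥LSet :=
  ⟨EuclideanSpace.single i (t : ℝ), by
    fin_cases i
    · exact Or.inr ⟨by simp, by simp⟩
    · exact Or.inl ⟨by simp, by simp⟩⟩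

theorem coe_leg_apply (i j : Fin 2) (t : unitInterval) :
    (leg i t).1 j = if j = i then (t : ℝ) else 0 :=
  PiLp.single_apply ..

theorem exists_leg_eq (p : ↥LSet) : ∃ i t, leg i t = p := by
  obtain ⟨p, ⟨h0, h1⟩ | ⟨h0, h1⟩⟩ := p
  · refine ⟨1, ⟨p 1, h1⟩, Subtype.ext ?_⟩
    ext j
    fin_cases j <;> simp [leg, h0]
  · refine ⟨0, ⟨p 0, h0⟩, Subtype.ext ?_⟩
    ext j
    fin_cases j <;> simp [leg, h1]

theorem leg_zero_eq_leg_zero (i j : Fin 2) : leg i 0 = leg j 0 :=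
  Subtype.ext <|
    ((PiLp.single_eq_zero_iff 2 i).2 rfl).trans ((PiLp.single_eq_zero_iff 2 j).2 rfl).symm

theorem isometry_leg (i : Fin 2) : Isometry (leg i) :=
  Isometry.of_dist_eq fun s t ↦ by simp [leg, Subtype.dist_eq]

theorem dist_leg_sq (s t : unitInterval) :
    dist (leg 0 s) (leg 1 t) ^ 2 = (s : ℝ) ^ 2 + (t : ℝ) ^ 2 := by
  rw [Subtype.dist_eq, EuclideanSpace.dist_sq_eq]
  simp [Fin.sum_univ_two, coe_leg_apply]

theorem isOpen_image_leg_Ioo (i : Fin 2) : IsOpen (leg i '' Ioo 0 1) := by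
  have h : leg i '' Ioo 0 1 = {p : ↥LSet | p.1 i ∈ Ioo (0 : ℝ) 1} := by
    ext p
    constructor
    · rintro ⟨t, ht, rfl⟩
      simpa [coe_leg_apply] using ht
    · intro hp
      obtain ⟨j, t, rfl⟩ := exists_leg_eq p
      obtain rfl : i = j := by
        by_contra hij
        simp [coe_leg_apply, hij] at hp
      exact ⟨t, by simpa [coe_leg_apply] using hp, rfl⟩
  rw [h]
  exact isOpen_Ioo.preimage (by fun_prop)

/-- The part of the L strictly within distance `c i` of the corner on the `i`-th leg; it is
empty if some `c i` is `0`, as the corner lies on both legs. -/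
def corner (c : Fin 2 → unitInterval) : Set ↥LSet :=
  {p | ∀ i, p.1 i < c i}

theorem isOpen_corner (c : Fin 2 → unitInterval) : IsOpen (corner c) := by
  simp only [corner, ofPred_forall]
  exact isOpen_iInter_of_finite fun i ↦ isOpen_lt (by fun_prop) continuous_const

theorem leg_mem_corner {c : Fin 2 → unitInterval} (hc : ∀ i, 0 < c i) {i : Fin 2}
    {t : unitInterval} (ht : t < c i) : leg i t ∈ corner c := by
  intro j
  rw [coe_leg_apply]
  split_ifs with h
  · exact h ▸ ht
  · exact hc j

theorem frontier_corner_subset {c : Fin 2 → unitInterval} (hc : ∀ i, 0 < c i) :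
    frontier (corner c) ⊆ {leg 0 (c 0), leg 1 (c 1)} := by
  rw [(isOpen_corner c).frontier_eq]
  rintro z ⟨hz, hzU⟩
  obtain ⟨i, t, rfl⟩ := exists_leg_eq z
  have hcl : IsClosed {p : ↥LSet | p.1 i ≤ c i} := isClosed_le (by fun_prop) continuous_const
  have hle : (leg i t).1 i ≤ c i := closure_minimal (fun p hp ↦ (hp i).le) hcl hz
  rw [coe_leg_apply, if_pos rfl] at hle
  have hlt : ¬ t < c i := fun h ↦ hzU (leg_mem_corner hc h)
  obtain rfl : t = c i := (Subtype.coe_le_coe.1 hle).eq_of_not_lt hlt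
  fin_cases i <;> simp

theorem corner_subset_compl {Y : Set ↥LSet} (hY : Y ⊆ range (leg · 1))
    (c : Fin 2 → unitInterval) : corner c ⊆ Yᶜ := by
  intro p hp hpY
  obtain ⟨i, rfl⟩ := hY hpY
  have h := hp i
  rw [coe_leg_apply, if_pos rfl] at h
  exact h.not_ge (c i).2.2

theorem image_leg_Ioo_subset_compl {Y : Set ↥LSet} (hY : Y ⊆ range (leg · 1)) (i : Fin 2) :
    leg i '' Ioo 0 1 ⊆ Yᶜ := by
  rintro _ ⟨t, ht, rfl⟩
  exact corner_subset_compl hY 1 (leg_mem_corner (fun _ ↦ zero_lt_one) ht.2)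

section AMExtension

variable {Y : Set ↥LSet} {F u : ↥LSet → ℝ}

theorem apply_leg (hu : IsAMExtension Y F u) (hY : Y ⊆ range (leg · 1)) (i : Fin 2)
    (t : unitInterval) : u (leg i t) = u (leg 0 0) + t * (u (leg i 1) - u (leg 0 0)) := by
  rw [leg_zero_eq_leg_zero 0 i]
  exact hu.apply_isometry (isometry_leg i) (isOpen_image_leg_Ioo i)
    (image_leg_Ioo_subset_compl hY i) t

theorem apply_leg_sub_apply_leg (hu : IsAMExtension Y F u) (hY : Y ⊆ range (leg · 1))
    (s t : unitInterval) : u (leg 0 s) - u (leg 1 t) =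
      (u (leg 0 1) - u (leg 0 0)) * s - (u (leg 1 1) - u (leg 0 0)) * t := by
  rw [apply_leg hu hY 0 s, apply_leg hu hY 1 t]
  ring

theorem dist_mul_dist_leg_le (hu : IsAMExtension Y F u) (hY : Y ⊆ range (leg · 1))
    {c d : Fin 2 → unitInterval} (hdc : ∀ i, d i < c i) :
    dist (u (leg 0 (d 0))) (u (leg 1 (d 1))) * dist (leg 0 (c 0)) (leg 1 (c 1)) ≤
      dist (u (leg 0 (c 0))) (u (leg 1 (c 1))) * dist (leg 0 (d 0)) (leg 1 (d 1)) := by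
  have hc : ∀ i, 0 < c i := fun i ↦ unitInterval.nonneg'.trans_lt (hdc i)
  have hd : ∀ i, leg i (d i) ∈ closure (corner c) := fun i ↦
    subset_closure (leg_mem_corner hc (hdc i))
  exact hu.dist_mul_dist_le (isOpen_corner c) (corner_subset_compl hY c)
    (frontier_corner_subset hc) (hd 0) (hd 1)

theorem sq_slope_mul_le (hu : IsAMExtension Y F u) (hY : Y ⊆ range (leg · 1))
    {c d : Fin 2 → unitInterval} (hdc : ∀ i, d i < c i) :
    ((u (leg 0 1) - u (leg 0 0)) * d 0 - (u (leg 1 1) - u (leg 0 0)) * d 1) ^ 2 *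
        ((c 0 : ℝ) ^ 2 + (c 1 : ℝ) ^ 2) ≤
      ((u (leg 0 1) - u (leg 0 0)) * c 0 - (u (leg 1 1) - u (leg 0 0)) * c 1) ^ 2 *
        ((d 0 : ℝ) ^ 2 + (d 1 : ℝ) ^ 2) := by
  have h := pow_le_pow_left₀ (by positivity) (dist_mul_dist_leg_le hu hY hdc) 2
  simpa only [mul_pow, dist_leg_sq, Real.dist_eq, sq_abs, apply_leg_sub_apply_leg hu hY] using h

theorem apply_leg_one (hu : IsAMExtension Y F u) (hY : Y ⊆ range (leg · 1)) (i : Fin 2) :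
    u (leg i 1) = u (leg 0 0) := by
  obtain ⟨h0, h1⟩ := eq_zero_of_forall_sq_mul_le (a := u (leg 0 1) - u (leg 0 0))
    (b := u (leg 1 1) - u (leg 0 0)) fun x y x' y' hx hy hx' hy' ↦
      sq_slope_mul_le hu hY
        (c := ![⟨x, hx'.1.trans hx'.2.le, hx⟩, ⟨y, hy'.1.trans hy'.2.le, hy⟩])
        (d := ![⟨x', hx'.1, hx'.2.le.trans hx⟩, ⟨y', hy'.1, hy'.2.le.trans hy⟩])
        (Fin.forall_fin_two.2 ⟨hx'.2, hy'.2⟩)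
  fin_cases i
  · exact sub_eq_zero.1 h0
  · exact sub_eq_zero.1 h1

end AMExtension

theorem coe_leg_zero_one : (leg 0 1 : EuclideanSpace ℝ (Fin 2)) = pt 1 0 := by
  ext j
  fin_cases j <;> simp [leg, pt]

theorem coe_leg_one_one : (leg 1 1 : EuclideanSpace ℝ (Fin 2)) = pt 0 1 := by
  ext j
  fin_cases j <;> simp [leg, pt]

theorem mem_range_leg_one {p : ↥LSet} (hp : (p : EuclideanSpace ℝ (Fin 2)) = pt 0 1 ∨
    (p : EuclideanSpace ℝ (Fin 2)) = pt 1 0) : p ∈ range (leg · 1) := by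
  rcases hp with hp | hp
  · exact ⟨1, Subtype.ext (coe_leg_one_one.trans hp.symm)⟩
  · exact ⟨0, Subtype.ext (coe_leg_zero_one.trans hp.symm)⟩

end LSet

/-- On the L-shaped space `X = ({0} × [0,1]) ∪ ([0,1] × {0})` with the Euclidean metric
and `Y = {(0,1), (1,0)}`, no nonconstant `F : Y → ℝ` admits an AM extension. -/
theorem stmt16 (F : ↥LSet → ℝ) (Y : Set ↥LSet)
    (hY : Y = {p : ↥LSet | (p : EuclideanSpace ℝ (Fin 2)) = pt 0 1 ∨
      (p : EuclideanSpace ℝ (Fin 2)) = pt 1 0})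
    (hF : ∃ p ∈ Y, ∃ q ∈ Y, F p ≠ F q) :
    ¬ ∃ u : ↥LSet → ℝ, IsAMExtension Y F u := by
  rintro ⟨u, hu⟩
  have hYleg : Y ⊆ range (LSet.leg · 1) := hY ▸ fun _ ↦ LSet.mem_range_leg_one
  obtain ⟨p, hp, q, hq, hne⟩ := hF
  have hconst : ∀ p ∈ Y, F p = u (LSet.leg 0 0) := by
    intro p hp
    obtain ⟨i, rfl⟩ := hYleg hp
    exact (hu.2.1 hp).symm.trans (LSet.apply_leg_one hu hYleg i)
  exact hne ((hconst p hp).trans (hconst q hq).symm)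

end
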